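/- arXiv:2009.04997 — 2 statements merged into one kernel-verified Lean document; each statement's English description precedes it below -/
import Mathlib

section
/- Let φ = (1 + √5)/2 be the golden ratio and let q = (i + φ⁻¹·j + φ·k)/2, a unit quaternion. Let I*₁₂₀ be the subgroup of the unit quaternions generated by T*₂₄ ∪ {q} (the binary icosahedral group). Then I*₁₂₀ has exactly 120 elements, T*₂₄ is a subgroup of I*₁₂₀ of index 5, and T*₂₄ is not a normal subgroup of I*₁₂₀. -/
/-- The imaginary unit `i` of the real quaternions. -/
noncomputable def qi : Quaternion ℝ := ⟨0, 1, 0, 0⟩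
/-- The imaginary unit `j` of the real quaternions. -/
noncomputable def qj : Quaternion ℝ := ⟨0, 0, 1, 0⟩
/-- The imaginary unit `k` of the real quaternions. -/
noncomputable def qk : Quaternion ℝ := ⟨0, 0, 0, 1⟩

/-- The quaternion group `Q₈ = {±1, ±i, ±j, ±k}`. -/
noncomputable def Q8 : Set (Quaternion ℝ) := {1, -1, qi, -qi, qj, -qj, qk, -qk}

/-- The binary tetrahedral group `T*₂₄` as a set of real quaternions. -/
noncomputable def T24 : Set (Quaternion ℝ) :=
  Q8 ∪
    {x | ∃ e₀ e₁ e₂ e₃ : ℝ, (e₀ = 1 ∨ e₀ = -1) ∧ (e₁ = 1 ∨ e₁ = -1) ∧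
      (e₂ = 1 ∨ e₂ = -1) ∧ (e₃ = 1 ∨ e₃ = -1) ∧
      x = ((e₀ : Quaternion ℝ) + (e₁ : Quaternion ℝ) * qi + (e₂ : Quaternion ℝ) * qj +
        (e₃ : Quaternion ℝ) * qk) / 2}

/-- The golden ratio `φ = (1 + √5)/2`. -/
noncomputable def goldφ : ℝ := (1 + Real.sqrt 5) / 2

/-- The unit quaternion `q = (i + φ⁻¹·j + φ·k)/2`. -/
noncomputable def icoq : Quaternion ℝ :=
  (qi + (goldφ⁻¹ : ℝ) * qj + (goldφ : ℝ) * qk) / 2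

/-- The subgroup of the quaternions generated (under multiplication and inversion) by a
set `S`: the smallest set containing `S`, containing `1`, and closed under multiplication
and inversion. -/
noncomputable def genSubgroup (S : Set (Quaternion ℝ)) : Set (Quaternion ℝ) :=
  ⋂₀ {G | S ⊆ G ∧ (1 : Quaternion ℝ) ∈ G ∧
    (∀ x ∈ G, ∀ y ∈ G, x * y ∈ G) ∧ (∀ x ∈ G, x⁻¹ ∈ G)}

/-- The binary icosahedral group `I*₁₂₀`: the subgroup of the unit quaternions generated by
`T*₂₄ ∪ {(i + φ⁻¹·j + φ·k)/2}`. -/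
noncomputable def I120 : Set (Quaternion ℝ) := genSubgroup (T24 ∪ {icoq})

/-!
Write `T = T*₂₄`. Since `q² = -1` lies in `T` and `q T q ⊆ T ∪ T q T`, the subgroup generated by
`T` and `q` is `T ∪ T q T`. Its left cosets of `T` are therefore `T` itself and the `T`-orbit of
`q T`, and that orbit has `[T : T ∩ q T q⁻¹]` elements. The intersection has order `6`, so the index
is `24 / 6 + 1 = 5` and the order is `5 · 24 = 120`. As `q` does not normalize `T`, the subgroup
`T` is not normal. All of this takes place in the quaternions over `ℚ(φ)`, where arithmetic is
exact and the finitely many facts about `T` and `q` are decidable.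
-/

open Quaternion MulAction Subgroup
open scoped Pointwise

section GroupTheory

variable {G : Type*} [Group G]

theorem ncard_orbit_subgroup {α : Type*} [MulAction G α] (K : Subgroup G) (a : α) :
    (orbit K a).ncard = (stabilizer G a).relIndex K :=
  (index_stabilizer K a).symm

theorem smul_mem_of_mem_closure {α : Type*} [MulAction G α] {S : Set G} {C : Set α}
    (hS : ∀ s ∈ S, ∀ c ∈ C, s • c ∈ C ∧ s⁻¹ • c ∈ C) {g : G} (hg : g ∈ closure S)
    {c : α} (hc : c ∈ C) : g • c ∈ C := by
  induction hg using closure_induction_left with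
  | one => rwa [one_smul]
  | mul_left s hs x _ ih => rw [mul_smul]; exact (hS s hs _ ih).1
  | inv_mul_cancel s hs x _ ih => rw [mul_smul]; exact (hS s hs _ ih).2

theorem orbit_closure_insert {α : Type*} [MulAction G α] {H : Subgroup G} {q : G} {a : α}
    (hHa : H ≤ stabilizer G a) (hqq : q * q ∈ H)
    (hqHq : ∀ t ∈ H, q * t * q ∈ H ∨ ∃ s ∈ H, ∃ u ∈ H, q * t * q = s * q * u) :
    orbit (closure (insert q (H : Set G))) a = insert a (orbit H (q • a)) := by
  set C : Set α := insert a (orbit H (q • a))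
  have smul_mem_of_mem : ∀ t ∈ H, ∀ c ∈ C, t • c ∈ C := by
    rintro t ht c (rfl | ⟨s, rfl⟩)
    · exact Or.inl (hHa ht)
    · exact Or.inr ⟨⟨t, ht⟩ * s, mul_smul _ _ _⟩
  have smul_mem : ∀ c ∈ C, q • c ∈ C := by
    rintro c (rfl | ⟨t, rfl⟩)
    · exact Or.inr (mem_orbit_self _)
    · have hqtq : q • t • q • a = (q * t * q) • a := by rw [mul_smul, mul_smul]; rfl
      rcases hqHq t t.2 with h | ⟨s, hs, u, hu, h⟩
      · exact Or.inl (hqtq.trans (hHa h))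
      · exact Or.inr ⟨⟨s, hs⟩, by rw [hqtq, h, mul_smul, mul_smul, hHa hu]; rfl⟩
  have inv_smul_mem : ∀ c ∈ C, q⁻¹ • c ∈ C := fun c hc => by
    rw [show q⁻¹ = (q * q)⁻¹ * q by group, mul_smul]
    exact smul_mem_of_mem _ (inv_mem hqq) _ (smul_mem c hc)
  apply Set.Subset.antisymm
  · rintro _ ⟨⟨g, hg⟩, rfl⟩
    refine smul_mem_of_mem_closure ?_ hg (Set.mem_insert a _)
    rintro s (rfl | hs) c hc
    · exact ⟨smul_mem c hc, inv_smul_mem c hc⟩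
    · exact ⟨smul_mem_of_mem s hs c hc, smul_mem_of_mem _ (inv_mem hs) c hc⟩
  · refine Set.insert_subset (mem_orbit_self _) ?_
    rintro _ ⟨t, rfl⟩
    exact ⟨⟨t * q, mul_mem (subset_closure (Or.inr t.2)) (subset_closure (Or.inl rfl))⟩,
      mul_smul _ _ _⟩

theorem relIndex_closure_insert {H : Subgroup G} {q : G}
    [(H.map (MulAut.conj q).toMonoidHom).IsFiniteRelIndex H] (hq : q ∉ H) (hqq : q * q ∈ H)
    (hqHq : ∀ t ∈ H, q * t * q ∈ H ∨ ∃ s ∈ H, ∃ u ∈ H, q * t * q = s * q * u) :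
    H.relIndex (closure (insert q (H : Set G))) =
      (H.map (MulAut.conj q).toMonoidHom).relIndex H + 1 := by
  have hstab : stabilizer G (H : Set G) = H := stabilizer_subgroup H
  have hcard : (orbit H (q • (H : Set G))).ncard =
      (H.map (MulAut.conj q).toMonoidHom).relIndex H := by
    rw [ncard_orbit_subgroup, stabilizer_smul_eq_stabilizer_map_conj, hstab]
  have hfinite : (orbit H (q • (H : Set G))).Finite :=
    Set.finite_of_ncard_ne_zero (hcard ▸ relIndex_ne_zero)
  have hnotMem : (H : Set G) ∉ orbit H (q • (H : Set G)) := by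
    rintro ⟨t, ht⟩
    have htq : (t * q : G) ∈ stabilizer G (H : Set G) := (mul_smul _ _ _).trans ht
    rw [hstab] at htq
    exact hq ((H.mul_mem_cancel_left t.2).mp htq)
  calc
    H.relIndex (closure (insert q (H : Set G)))
      = (orbit (closure (insert q (H : Set G))) (H : Set G)).ncard := by
        rw [ncard_orbit_subgroup, hstab]
    _ = (insert (H : Set G) (orbit H (q • (H : Set G)))).ncard := by
        rw [orbit_closure_insert hstab.ge hqq hqHq]
    _ = (H.map (MulAut.conj q).toMonoidHom).relIndex H + 1 := by
        rw [Set.ncard_insert_of_notMem hnotMem hfinite, hcard]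

theorem ncard_leftCosets_image {M : Type*} [Monoid M] {f : G →* M} (hf : Function.Injective f)
    (H K : Subgroup G) :
    {C : Set M | ∃ x ∈ f '' K, C = (fun y => x * y) '' (f '' H)}.ncard = H.relIndex K := by
  have himage : {C : Set M | ∃ x ∈ f '' K, C = (fun y => x * y) '' (f '' H)} =
      Set.image f '' orbit K (H : Set G) := by
    have hcoset (x : G) : (fun y => f x * y) '' (f '' H) = f '' (x • (H : Set G)) := by
      simp only [← Set.image_smul, Set.image_image, smul_eq_mul, map_mul]
    ext C
    constructor
    · rintro ⟨_, ⟨x, hx, rfl⟩, rfl⟩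
      exact ⟨x • (H : Set G), ⟨⟨x, hx⟩, rfl⟩, (hcoset x).symm⟩
    · rintro ⟨_, ⟨x, rfl⟩, rfl⟩
      exact ⟨f x, ⟨x, x.2, rfl⟩, (hcoset x).symm⟩
  rw [himage, Set.ncard_image_of_injective _ hf.image_injective, ncard_orbit_subgroup,
    stabilizer_subgroup]

theorem genSubgroup_image (f : G →* ℍ[ℝ]) (S : Set G) :
    genSubgroup (f '' S) = f '' closure S := by
  apply Set.Subset.antisymm
  · refine Set.sInter_subset_of_mem
      ⟨Set.image_mono subset_closure, ⟨1, one_mem _, map_one f⟩, ?_, ?_⟩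
    · rintro _ ⟨x, hx, rfl⟩ _ ⟨y, hy, rfl⟩
      exact ⟨x * y, mul_mem hx hy, map_mul f x y⟩
    · rintro _ ⟨x, hx, rfl⟩
      exact ⟨x⁻¹, inv_mem hx, map_inv f x⟩
  · rintro _ ⟨x, hx, rfl⟩ P ⟨hsub, hone, hmul, hinv⟩
    induction hx using closure_induction with
    | mem x hx => exact hsub ⟨x, hx, rfl⟩
    | one => rwa [map_one]
    | mul x y _ _ ihx ihy => rw [map_mul]; exact hmul _ ihx _ ihy
    | inv x _ ih => rw [map_inv]; exact hinv _ ih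

end GroupTheory

/-- The field `ℚ(φ)` in the basis `1, φ`, with decidable equality and computable arithmetic. -/
abbrev GoldenField : Type := QuadraticAlgebra ℚ 1 1

namespace GoldenField

/-- The embedding of `ℚ(φ)` into the reals sending `φ` to the golden ratio. -/
noncomputable def toReal : GoldenField →ₐ[ℚ] ℝ :=
  QuadraticAlgebra.lift ⟨Real.goldenRatio, by
    simp [← sq, Real.goldenRatio_sq, add_comm]⟩

theorem toReal_apply (x : GoldenField) : toReal x = x.re + x.im * Real.goldenRatio := by
  simp [toReal, QuadraticAlgebra.lift, Algebra.smul_def]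

theorem toReal_injective : Function.Injective toReal := by
  refine (injective_iff_map_eq_zero _).mpr fun x hx => ?_
  rw [toReal_apply] at hx
  have him : x.im = 0 := by
    by_contra h
    exact ((Real.goldenRatio_irrational.ratCast_mul h).ratCast_add x.re).ne_zero hx
  have hre : x.re = 0 := by simpa [him] using hx
  exact QuadraticAlgebra.ext hre him

end GoldenField

section QuaternionMap

variable {R S : Type*} [CommRing R] [CommRing S]

instance [DecidableEq R] : DecidableEq ℍ[R] := fun _ _ =>
  decidable_of_iff _ Quaternion.ext_iff.symm

/-- The quaternion `a + b i + c j + d k`, whose type is `ℍ[R]` on the nose; the anonymous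
constructor elaborates to a term of `ℍ[R,-1,0,-1]`, which blocks `simp`. -/
@[simps]
def quaternionOf (a b c d : R) : ℍ[R] := ⟨a, b, c, d⟩

/-- The ring homomorphism `ℍ[R] → ℍ[S]` applying `g : R → S` to each coordinate. -/
def quaternionMap (g : R →+* S) : ℍ[R] →+* ℍ[S] where
  toFun x := quaternionOf (g x.re) (g x.imI) (g x.imJ) (g x.imK)
  map_one' := by ext <;> simp
  map_zero' := by ext <;> simp
  map_mul' x y := by ext <;> simp
  map_add' x y := by ext <;> simp

theorem quaternionMap_injective {g : R →+* S} (hg : Function.Injective g) :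
    Function.Injective (quaternionMap g) := fun x y h => by
  obtain ⟨hre, hI, hJ, hK⟩ := Quaternion.ext_iff.mp h
  exact QuaternionAlgebra.ext (hg hre) (hg hI) (hg hJ) (hg hK)

theorem quaternionMap_quaternionOf (g : R →+* S) (a b c d : R) :
    quaternionMap g (quaternionOf a b c d) = quaternionOf (g a) (g b) (g c) (g d) := rfl

end QuaternionMap

theorem qi_eq_quaternionOf : qi = quaternionOf 0 1 0 0 := rfl

theorem qj_eq_quaternionOf : qj = quaternionOf 0 0 1 0 := rfl

theorem qk_eq_quaternionOf : qk = quaternionOf 0 0 0 1 := rfl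

theorem add_mul_units_div_two (a b c d : ℝ) :
    ((a : ℍ[ℝ]) + (b : ℍ[ℝ]) * qi + (c : ℍ[ℝ]) * qj + (d : ℍ[ℝ]) * qk) / 2 =
      quaternionOf (a / 2) (b / 2) (c / 2) (d / 2) := by
  have htwo : (2 : ℍ[ℝ]) ≠ 0 := fun h => two_ne_zero (congrArg QuaternionAlgebra.re h)
  rw [div_eq_iff htwo, mul_two, Quaternion.ext_iff]
  simp [qi_eq_quaternionOf, qj_eq_quaternionOf, qk_eq_quaternionOf]

/-- The 24 units of the ring of Hurwitz quaternions, with rational coordinates. -/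
def hurwitzUnits : Finset ℍ[ℚ] :=
  {1, -1, quaternionOf 0 1 0 0, -quaternionOf 0 1 0 0, quaternionOf 0 0 1 0,
    -quaternionOf 0 0 1 0, quaternionOf 0 0 0 1, -quaternionOf 0 0 0 1} ∪
    (({1, -1} : Finset ℚ) ×ˢ ({1, -1} : Finset ℚ) ×ˢ
      ({1, -1} : Finset ℚ) ×ˢ ({1, -1} : Finset ℚ)).image
        fun e => quaternionOf (e.1 / 2) (e.2.1 / 2) (e.2.2.1 / 2) (e.2.2.2 / 2)

theorem image_hurwitzUnits : quaternionMap (algebraMap ℚ ℝ) '' hurwitzUnits = T24 := by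
  rw [hurwitzUnits, Finset.coe_union, Set.image_union, T24]
  congr 1
  · simp [Set.image_insert_eq, Q8, quaternionMap_quaternionOf, qi_eq_quaternionOf,
      qj_eq_quaternionOf, qk_eq_quaternionOf]
  · ext x
    simp [quaternionMap_quaternionOf, add_mul_units_div_two, or_and_right, exists_or,
      eq_comm (a := x)]

theorem card_hurwitzUnits : hurwitzUnits.card = 24 := by decide +kernel

theorem mul_mem_hurwitzUnits : ∀ x ∈ hurwitzUnits, ∀ y ∈ hurwitzUnits, x * y ∈ hurwitzUnits := by
  decide +kernel

theorem coe_image_eq_of_mem_iff {R : Type*} [Monoid R] [StarMul R] {H : Subgroup (unitary R)}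
    {s : Finset R} (hs : ∀ x ∈ s, x ∈ unitary R) (hH : ∀ u, u ∈ H ↔ (u : R) ∈ s) :
    Subtype.val '' (H : Set (unitary R)) = s :=
  Set.Subset.antisymm (Set.image_subset_iff.mpr fun u => (hH u).mp)
    fun x hx => ⟨⟨x, hs x hx⟩, (hH _).mpr hx, rfl⟩

theorem card_eq_of_mem_iff {R : Type*} [Monoid R] [StarMul R] {H : Subgroup (unitary R)}
    {s : Finset R} (hs : ∀ x ∈ s, x ∈ unitary R) (hH : ∀ u, u ∈ H ↔ (u : R) ∈ s) :
    Nat.card H = s.card := by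
  rw [← Set.ncard_coe_finset, ← coe_image_eq_of_mem_iff hs hH,
    Set.ncard_image_of_injective _ Subtype.val_injective]
  exact Nat.card_coe_set_eq _

namespace Icosian

/-- The elements of the binary tetrahedral group, with coordinates in `ℚ(φ)`. -/
def tetUnits : Finset ℍ[GoldenField] :=
  hurwitzUnits.image (quaternionMap (algebraMap ℚ GoldenField))

theorem card_tetUnits : tetUnits.card = 24 := by
  rw [tetUnits, Finset.card_image_of_injective _
    (quaternionMap_injective (algebraMap ℚ GoldenField).injective), card_hurwitzUnits]

theorem one_mem_tetUnits : 1 ∈ tetUnits := by decide +kernel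

theorem mul_mem_tetUnits {x y : ℍ[GoldenField]} (hx : x ∈ tetUnits)
    (hy : y ∈ tetUnits) : x * y ∈ tetUnits := by
  obtain ⟨a, ha, rfl⟩ := Finset.mem_image.mp hx
  obtain ⟨b, hb, rfl⟩ := Finset.mem_image.mp hy
  rw [← map_mul]
  exact Finset.mem_image_of_mem _ (mul_mem_hurwitzUnits a ha b hb)

theorem star_mem_tetUnits : ∀ t ∈ tetUnits, star t ∈ tetUnits := by
  decide +kernel

theorem mem_unitary_of_mem_tetUnits :
    ∀ t ∈ tetUnits, t ∈ unitary ℍ[GoldenField] := by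
  simp only [Unitary.mem_iff]
  decide +kernel

/-- The binary tetrahedral group `T*₂₄` as a subgroup of the unit quaternions over `ℚ(φ)`. -/
def tetGroup : Subgroup (unitary ℍ[GoldenField]) where
  carrier := {u | (u : ℍ[GoldenField]) ∈ tetUnits}
  one_mem' := one_mem_tetUnits
  mul_mem' := mul_mem_tetUnits
  inv_mem' {t} ht := star_mem_tetUnits t ht

/-- The quaternion `(i + φ⁻¹ j + φ k)/2` over `ℚ(φ)`, where `φ⁻¹ = φ - 1`. -/
def generator : ℍ[GoldenField] := quaternionOf 0 ⟨1 / 2, 0⟩ ⟨-1 / 2, 1 / 2⟩ ⟨0, 1 / 2⟩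

/-- The generator `q` of the binary icosahedral group, as an element of the group of unit
quaternions over `ℚ(φ)`. -/
def q : unitary ℍ[GoldenField] := ⟨generator, Unitary.mem_iff.mpr (by decide +kernel)⟩

/-- The binary icosahedral group `I*₁₂₀` as a subgroup of the unit quaternions over `ℚ(φ)`. -/
def icoGroup : Subgroup (unitary ℍ[GoldenField]) := closure (insert q tetGroup)

/-- The embedding of the unit quaternions over `ℚ(φ)` into the real quaternions. -/
noncomputable def toRealQuaternion : unitary ℍ[GoldenField] →* ℍ[ℝ] :=
  (quaternionMap GoldenField.toReal.toRingHom).toMonoidHom.comp (unitary ℍ[GoldenField]).subtype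

theorem toRealQuaternion_injective : Function.Injective toRealQuaternion :=
  (quaternionMap_injective GoldenField.toReal_injective).comp Subtype.val_injective

theorem toRealQuaternion_q : toRealQuaternion q = icoq := by
  have hcoords : icoq = quaternionOf 0 (1 / 2) (goldφ⁻¹ / 2) (goldφ / 2) := by
    have h := add_mul_units_div_two 0 1 goldφ⁻¹ goldφ
    rwa [Quaternion.coe_zero, Quaternion.coe_one, one_mul, zero_add, zero_div] at h
  rw [hcoords, show goldφ = Real.goldenRatio from rfl, Real.inv_goldenRatio,
    ← Real.one_sub_goldenConj]
  refine (quaternionMap_quaternionOf _ _ _ _ _).trans ?_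
  congr 1
  · exact map_zero GoldenField.toReal
  all_goals
    refine (GoldenField.toReal_apply _).trans ?_
    push_cast
    ring

theorem image_tetGroup : toRealQuaternion '' tetGroup = T24 := by
  have hcomp (x : ℍ[ℚ]) : quaternionMap GoldenField.toReal.toRingHom
      (quaternionMap (algebraMap ℚ GoldenField) x) = quaternionMap (algebraMap ℚ ℝ) x :=
    QuaternionAlgebra.ext (GoldenField.toReal.commutes _) (GoldenField.toReal.commutes _)
      (GoldenField.toReal.commutes _) (GoldenField.toReal.commutes _)
  calc
    toRealQuaternion '' tetGroup =
        quaternionMap GoldenField.toReal.toRingHom ''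
          (Subtype.val '' (tetGroup : Set (unitary ℍ[GoldenField]))) :=
      (Set.image_image (quaternionMap GoldenField.toReal.toRingHom) Subtype.val _).symm
    _ = T24 := by
      rw [coe_image_eq_of_mem_iff mem_unitary_of_mem_tetUnits fun _ => Iff.rfl, tetUnits,
        Finset.coe_image, Set.image_image]
      simp only [hcomp, image_hurwitzUnits]

theorem q_notMem_tetGroup : q ∉ tetGroup :=
  show generator ∉ tetUnits by decide +kernel

theorem q_mul_self_mem_tetGroup : q * q ∈ tetGroup :=
  show generator * generator ∈ tetUnits by decide +kernel

theorem q_mul_mul_q_mem : ∀ t ∈ tetGroup, q * t * q ∈ tetGroup ∨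
    ∃ s ∈ tetGroup, ∃ u ∈ tetGroup, q * t * q = s * q * u := by
  have hgen : ∀ t ∈ tetUnits, generator * t * generator ∈ tetUnits ∨
      ∃ s ∈ tetUnits, ∃ u ∈ tetUnits, generator * t * generator = s * generator * u := by
    decide +kernel
  intro t ht
  refine (hgen t ht).imp id ?_
  rintro ⟨s, hs, u, hu, h⟩
  exact ⟨⟨s, mem_unitary_of_mem_tetUnits s hs⟩, hs, ⟨u, mem_unitary_of_mem_tetUnits u hu⟩, hu,
    Subtype.ext h⟩

theorem card_filter_conj_generator_mem :
    (tetUnits.filter fun t => star generator * t * generator ∈ tetUnits).card = 6 := by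
  decide +kernel

theorem card_tetGroup : Nat.card tetGroup = 24 :=
  (card_eq_of_mem_iff mem_unitary_of_mem_tetUnits fun _ => Iff.rfl).trans card_tetUnits

theorem card_map_conj_inf_tetGroup :
    Nat.card (tetGroup.map (MulAut.conj q).toMonoidHom ⊓ tetGroup : Subgroup _) = 6 := by
  rw [← card_filter_conj_generator_mem]
  refine card_eq_of_mem_iff
    (fun t ht => mem_unitary_of_mem_tetUnits t (Finset.mem_filter.mp ht).1) fun u => ?_
  have hconj : u ∈ tetGroup.map (MulAut.conj q).toMonoidHom ↔ q⁻¹ * u * q ∈ tetGroup := by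
    rw [Subgroup.mem_map_equiv]; rfl
  rw [Subgroup.mem_inf, hconj, Finset.mem_filter, and_comm]
  rfl

theorem map_conj_relIndex_tetGroup :
    (tetGroup.map (MulAut.conj q).toMonoidHom).relIndex tetGroup = 4 := by
  have h := relIndex_mul_relIndex ⊥ (tetGroup.map (MulAut.conj q).toMonoidHom ⊓ tetGroup) tetGroup
    bot_le inf_le_right
  rw [relIndex_bot_left, relIndex_bot_left, card_map_conj_inf_tetGroup, card_tetGroup,
    inf_relIndex_right] at h
  lia

theorem image_icoGroup : toRealQuaternion '' icoGroup = I120 := by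
  rw [icoGroup, ← genSubgroup_image, Set.image_insert_eq, image_tetGroup,
    toRealQuaternion_q, I120, Set.union_singleton]

theorem tetGroup_le_icoGroup : tetGroup ≤ icoGroup := fun _ ht => subset_closure (Or.inr ht)

theorem q_mem_icoGroup : q ∈ icoGroup := subset_closure (Or.inl rfl)

theorem tetGroup_relIndex_icoGroup : tetGroup.relIndex icoGroup = 5 := by
  have : (tetGroup.map (MulAut.conj q).toMonoidHom).IsFiniteRelIndex tetGroup :=
    ⟨by rw [map_conj_relIndex_tetGroup]; norm_num⟩
  rw [icoGroup, relIndex_closure_insert q_notMem_tetGroup q_mul_self_mem_tetGroup q_mul_mul_q_mem,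
    map_conj_relIndex_tetGroup]

theorem card_icoGroup : Nat.card icoGroup = 120 := by
  have h := relIndex_mul_relIndex ⊥ tetGroup icoGroup bot_le tetGroup_le_icoGroup
  rwa [relIndex_bot_left, relIndex_bot_left, card_tetGroup, tetGroup_relIndex_icoGroup,
    eq_comm] at h

theorem exists_conj_q_notMem_tetGroup : ∃ t ∈ tetGroup, q⁻¹ * t * q ∉ tetGroup := by
  by_contra! h
  have hle : tetGroup ≤ tetGroup.map (MulAut.conj q).toMonoidHom := fun t ht =>
    Subgroup.mem_map_equiv.mpr (h t ht)
  have hone := relIndex_eq_one.mpr hle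
  rw [map_conj_relIndex_tetGroup] at hone
  lia

end Icosian

open Icosian in
/-- `I*₁₂₀` has exactly 120 elements; `T*₂₄` is a subgroup of `I*₁₂₀` of index 5
(there are exactly 5 left cosets of `T*₂₄` in `I*₁₂₀`), and `T*₂₄` is not normal
in `I*₁₂₀`. -/
theorem I120_card_and_T24_index_five_not_normal :
    I120.ncard = 120 ∧
    T24 ⊆ I120 ∧
    Set.ncard {C : Set (Quaternion ℝ) | ∃ x ∈ I120, C = (fun y => x * y) '' T24} = 5 ∧
    ¬ (∀ x ∈ I120, ∀ t ∈ T24, x * t * x⁻¹ ∈ T24) := by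
  rw [← image_icoGroup, ← image_tetGroup]
  refine ⟨?_, Set.image_mono tetGroup_le_icoGroup, ?_, fun hnormal => ?_⟩
  · exact (Set.ncard_image_of_injective _ toRealQuaternion_injective).trans card_icoGroup
  · exact (ncard_leftCosets_image toRealQuaternion_injective tetGroup icoGroup).trans
      tetGroup_relIndex_icoGroup
  · obtain ⟨t, ht, hqt⟩ := exists_conj_q_notMem_tetGroup
    have h := hnormal _ ⟨q⁻¹, inv_mem q_mem_icoGroup, rfl⟩ _ ⟨t, ht, rfl⟩
    rw [← map_inv, ← map_mul, ← map_mul, inv_inv,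
      toRealQuaternion_injective.mem_set_image] at h
    exact hqt h
end

section
/- Let φ = (1 + √5)/2 and let I*₁₂₀ be the binary icosahedral group, the subgroup of the unit quaternions generated by T*₂₄ ∪ {(i + φ⁻¹·j + φ·k)/2}. If x and y are two distinct elements of I*₁₂₀ with ‖x − y‖ = φ⁻¹ (that is, x and y are endpoints of an edge of the regular 600-cell whose vertex set is I*₁₂₀), then x and y lie in different left cosets of T*₂₄ in I*₁₂₀, i.e. x⁻¹·y ∉ T*₂₄. Hence the five left cosets of T*₂₄ in I*₁₂₀ furnish a proper 5-colouring of the facet adjacency graph of the 120-cell. -/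
/-!
A nontrivial element of `T24` has real part at most `1 / 2`, so it makes an angle of at least `60°`
with `1` and lies at distance at least `1` from it. For a unit quaternion `x`, left multiplication
by `x⁻¹` is an isometry and carries an edge `x`, `y` of length `φ⁻¹ < 1` to the pair `1`,
`x⁻¹ * y`, which is too close together for `x⁻¹ * y` to be in `T24`.
-/

open Quaternion
open scoped RealInnerProductSpace

theorem one_le_norm_sub_iff_inner_le_half {E : Type*} [SeminormedAddCommGroup E]
    [InnerProductSpace ℝ E] {u v : E} (hu : ‖u‖ = 1) (hv : ‖v‖ = 1) :
    1 ≤ ‖u - v‖ ↔ ⟪u, v⟫ ≤ 1 / 2 := by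
  rw [← one_le_sq_iff₀ (norm_nonneg _), norm_sub_sq_real, hu, hv]
  constructor <;> intro h <;> linarith

theorem norm_one_sub_inv_mul {K : Type*} [NormedDivisionRing K] {x : K} (hx : x ≠ 0) (y : K) :
    ‖1 - x⁻¹ * y‖ = ‖x - y‖ / ‖x‖ := by
  rw [← inv_mul_cancel₀ hx, ← mul_sub, norm_mul, norm_inv, inv_mul_eq_div]

theorem norm_eq_one_iff_normSq_eq_one {x : ℍ} : ‖x‖ = 1 ↔ normSq x = 1 := by
  rw [normSq_eq_norm_mul_self, ← sq,
    pow_eq_one_iff_of_nonneg (norm_nonneg x) two_ne_zero]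

theorem normSq_div_ofNat {R : Type*} [Field R] [LinearOrder R] [IsStrictOrderedRing R]
    (x : ℍ[R]) (n : ℕ) [n.AtLeastTwo] :
    normSq (x / ofNat(n)) = normSq x / ofNat(n) ^ 2 := by
  rw [normSq_div, ← Nat.cast_ofNat, normSq_natCast, Nat.cast_ofNat]

theorem re_div_ofNat {R : Type*} [Field R] [LinearOrder R] [IsStrictOrderedRing R]
    (x : ℍ[R]) (n : ℕ) [n.AtLeastTwo] : (x / ofNat(n)).re = x.re / ofNat(n) := by
  rw [← Nat.cast_ofNat, ← coe_natCast, div_eq_mul_inv, ← coe_inv,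
    mul_coe_eq_smul, re_smul, smul_eq_mul, inv_mul_eq_div, Nat.cast_ofNat]

@[simp] theorem re_qi : qi.re = 0 := rfl
@[simp] theorem imI_qi : qi.imI = 1 := rfl
@[simp] theorem imJ_qi : qi.imJ = 0 := rfl
@[simp] theorem imK_qi : qi.imK = 0 := rfl

@[simp] theorem re_qj : qj.re = 0 := rfl
@[simp] theorem imI_qj : qj.imI = 0 := rfl
@[simp] theorem imJ_qj : qj.imJ = 1 := rfl
@[simp] theorem imK_qj : qj.imK = 0 := rfl

@[simp] theorem re_qk : qk.re = 0 := rfl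
@[simp] theorem imI_qk : qk.imI = 0 := rfl
@[simp] theorem imJ_qk : qk.imJ = 0 := rfl
@[simp] theorem imK_qk : qk.imK = 1 := rfl

theorem normSq_coe_add_mul_qi_add_mul_qj_add_mul_qk (a b c d : ℝ) :
    normSq ((a : ℍ) + (b : ℍ) * qi + (c : ℍ) * qj + (d : ℍ) * qk) =
      a ^ 2 + b ^ 2 + c ^ 2 + d ^ 2 := by
  simp [normSq_def']

theorem norm_eq_one_of_mem_Q8 {t : ℍ} (ht : t ∈ Q8) : ‖t‖ = 1 := by
  rw [norm_eq_one_iff_normSq_eq_one]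
  rcases ht with rfl | rfl | rfl | rfl | rfl | rfl | rfl | rfl <;> simp [normSq_def']

theorem norm_eq_one_of_mem_T24 {t : ℍ} (ht : t ∈ T24) : ‖t‖ = 1 := by
  rcases ht with ht | ⟨e₀, e₁, e₂, e₃, h₀, h₁, h₂, h₃, rfl⟩
  · exact norm_eq_one_of_mem_Q8 ht
  · rw [← sq_eq_one_iff] at h₀ h₁ h₂ h₃
    rw [norm_eq_one_iff_normSq_eq_one, normSq_div_ofNat,
      normSq_coe_add_mul_qi_add_mul_qj_add_mul_qk, h₀, h₁, h₂, h₃]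
    norm_num

theorem re_nonpos_of_mem_Q8 {t : ℍ} (ht : t ∈ Q8) (ht₁ : t ≠ 1) : t.re ≤ 0 := by
  rcases ht with rfl | rfl | rfl | rfl | rfl | rfl | rfl | rfl
  · exact absurd rfl ht₁
  all_goals simp

theorem re_le_half_of_mem_T24 {t : ℍ} (ht : t ∈ T24) (ht₁ : t ≠ 1) : t.re ≤ 1 / 2 := by
  rcases ht with ht | ⟨e₀, e₁, e₂, e₃, h₀, -, -, -, rfl⟩
  · exact (re_nonpos_of_mem_Q8 ht ht₁).trans one_half_pos.le
  · have he₀ : e₀ ≤ 1 := by rcases h₀ with rfl | rfl <;> norm_num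
    rw [re_div_ofNat]
    simpa using div_le_div_of_nonneg_right he₀ zero_le_two

theorem one_le_norm_one_sub_of_mem_T24 {t : ℍ} (ht : t ∈ T24) (ht₁ : t ≠ 1) : 1 ≤ ‖1 - t‖ := by
  rw [one_le_norm_sub_iff_inner_le_half norm_one (norm_eq_one_of_mem_T24 ht)]
  simpa [inner_def] using re_le_half_of_mem_T24 ht ht₁

theorem goldφ_eq_goldenRatio : goldφ = Real.goldenRatio := rfl

theorem inv_goldφ : goldφ⁻¹ = goldφ - 1 := by
  rw [goldφ_eq_goldenRatio, Real.inv_goldenRatio, ← Real.one_sub_goldenRatio]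
  ring

theorem inv_goldφ_lt_one : goldφ⁻¹ < 1 := inv_lt_one_of_one_lt₀ Real.one_lt_goldenRatio

theorem norm_icoq : ‖icoq‖ = 1 := by
  have hφ : goldφ ^ 2 = goldφ + 1 := Real.goldenRatio_sq
  have hicoq : icoq = ((0 : ℝ) + (1 : ℝ) * qi + (goldφ⁻¹ : ℝ) * qj + (goldφ : ℝ) * qk) / 2 := by
    simp [icoq]
  rw [norm_eq_one_iff_normSq_eq_one, hicoq, normSq_div_ofNat,
    normSq_coe_add_mul_qi_add_mul_qj_add_mul_qk, inv_goldφ]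
  linear_combination (1 / 2) * hφ

theorem norm_eq_one_of_mem_genSubgroup {S : Set ℍ} (hS : ∀ s ∈ S, ‖s‖ = 1) {x : ℍ}
    (hx : x ∈ genSubgroup S) : ‖x‖ = 1 := by
  refine hx {y | ‖y‖ = 1} ⟨hS, norm_one, fun a ha b hb ↦ ?_, fun a ha ↦ ?_⟩
  · rw [Set.mem_ofPred_eq] at ha hb ⊢
    rw [norm_mul, ha, hb, one_mul]
  · rw [Set.mem_ofPred_eq] at ha ⊢
    rw [norm_inv, ha, inv_one]

theorem norm_eq_one_of_mem_I120 {x : ℍ} (hx : x ∈ I120) : ‖x‖ = 1 := by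
  refine norm_eq_one_of_mem_genSubgroup ?_ hx
  rintro s (hs | rfl)
  · exact norm_eq_one_of_mem_T24 hs
  · exact norm_icoq

theorem adjacent_600cell_vertices_in_different_T24_cosets_general {x y : ℍ} (hne : x ≠ y)
    (hxy : ‖x - y‖ < ‖x‖) : x⁻¹ * y ∉ T24 := by
  intro ht
  have hx_pos : 0 < ‖x‖ := (norm_nonneg _).trans_lt hxy
  have hx : x ≠ 0 := norm_pos_iff.mp hx_pos
  have ht₁ : x⁻¹ * y ≠ 1 := fun h ↦ hne ((inv_mul_eq_one₀ hx).mp h)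
  have hclose : ‖1 - x⁻¹ * y‖ < 1 := by
    rwa [norm_one_sub_inv_mul hx, div_lt_one hx_pos]
  exact (one_le_norm_one_sub_of_mem_T24 ht ht₁).not_gt hclose

/-- If `x` and `y` are distinct elements of `I*₁₂₀` at Euclidean distance `φ⁻¹` (i.e. the
endpoints of an edge of the regular 600-cell with vertex set `I*₁₂₀`), then they lie in
different left cosets of `T*₂₄` in `I*₁₂₀`: `x⁻¹ * y ∉ T*₂₄`.  Hence the five left cosets
of `T*₂₄` in `I*₁₂₀` furnish a proper 5-colouring of the facet adjacency graph of the
120-cell. -/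
theorem adjacent_600cell_vertices_in_different_T24_cosets :
    ∀ x ∈ I120, ∀ y ∈ I120, x ≠ y → ‖x - y‖ = goldφ⁻¹ → x⁻¹ * y ∉ T24 := by
  intro x hx y _ hne hdist
  exact adjacent_600cell_vertices_in_different_T24_cosets_general hne
    (hdist.trans_lt (inv_goldφ_lt_one.trans_eq (norm_eq_one_of_mem_I120 hx).symm))
end
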